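/- arXiv:2004.08001 — 2 statements merged into one kernel-verified Lean document; each statement's English description precedes it below -/
import Mathlib

section
/- Let q be a prime power, let k > 1, and let d_1, …, d_k be positive integers. The number of tuples (x_1, …, x_k) with x_i ∈ F_{q^{d_i}} for each i satisfying x_1 + ⋯ + x_k = 0 equals q^{d_1 + ⋯ + d_k − λ(d_1, …, d_k)}, where λ(d_1, …, d_k) = ∑_{i=1}^k d_i + ∑_{j=2}^k (−1)^{j+1} ∑_{1 ≤ i_1 < ⋯ < i_j ≤ k} gcd(d_{i_1}, …, d_{i_j}). -/
open Polynomial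

/-- `λ(d₁, …, d_k) = ∑ dᵢ + ∑_{j=2}^{k} (-1)^{j+1} ∑_{1 ≤ i₁ < ⋯ < i_j ≤ k} gcd(d_{i₁}, …, d_{i_j})`. -/
def lambdaSum {k : ℕ} (d : Fin k → ℕ) : ℤ :=
  (∑ i, (d i : ℤ)) + ∑ j ∈ Finset.Icc 2 k, (-1 : ℤ) ^ (j + 1) *
    ∑ s ∈ Finset.powersetCard j (Finset.univ : Finset (Fin k)), ((s.gcd d : ℕ) : ℤ)

/-!
The subfield `F_{q^d}` is the kernel of `X ^ d - 1` evaluated at the `q`-Frobenius, an `F_q`-linear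
endomorphism. Dimensions of subspaces do not satisfy inclusion–exclusion in general, but kernels of
polynomials in one fixed endomorphism form a distributive lattice, on which they do. As the
intersection of the `F_{q^{dᵢ}}` is `F_{q^g}` with `g` the gcd of the `dᵢ`, the sum of these
subfields has dimension `λ`. The tuples to be counted form the kernel of the summation map from
`∏ᵢ F_{q^{dᵢ}}` onto this sum.
-/

section InclusionExclusion

variable {ι α G : Type*} [AddCommGroup G]

section SemilatticeInf

variable [SemilatticeInf α]

/-- The summand `(-1) ^ (#t + 1) • v (⨅ i ∈ t, f i)` that a set of indices `t` contributes to the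
inclusion–exclusion formula. The empty set contributes `0`, as `α` need not have a top element. -/
def inclusionExclusionTerm (v : α → G) (f : ι → α) (t : Finset ι) : G :=
  if ht : t.Nonempty then (-1 : ℤ) ^ (t.card + 1) • v (t.inf' ht f) else 0

lemma inclusionExclusionTerm_empty (v : α → G) (f : ι → α) :
    inclusionExclusionTerm v f ∅ = 0 :=
  dif_neg Finset.not_nonempty_empty

lemma inclusionExclusionTerm_of_nonempty (v : α → G) (f : ι → α) {t : Finset ι}
    (ht : t.Nonempty) :
    inclusionExclusionTerm v f t = (-1 : ℤ) ^ (t.card + 1) • v (t.inf' ht f) :=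
  dif_pos ht

lemma inclusionExclusionTerm_insert [DecidableEq ι] (v : α → G) (f : ι → α) {a : ι}
    {t : Finset ι} (ha : a ∉ t) :
    inclusionExclusionTerm v f (insert a t) =
      (if t = ∅ then v (f a) else 0) - inclusionExclusionTerm v (fun i ↦ f a ⊓ f i) t := by
  rw [inclusionExclusionTerm_of_nonempty v f (Finset.insert_nonempty a t),
    Finset.card_insert_of_notMem ha]
  obtain rfl | ht := t.eq_empty_or_nonempty
  · simp [inclusionExclusionTerm_empty]
  · have hinf : (insert a t).inf' (Finset.insert_nonempty a t) f =
        t.inf' ht fun i ↦ f a ⊓ f i := by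
      rw [Finset.inf'_insert ht]
      exact Finset.apply_inf'_eq_inf'_comp ht (f a ⊓ ·) fun x y ↦ inf_inf_distrib_left _ x y
    rw [hinf, inclusionExclusionTerm_of_nonempty _ _ ht, if_neg ht.ne_empty, pow_succ _ (_ + 1)]
    simp

end SemilatticeInf

theorem map_finset_sup_eq_sum_inclusionExclusionTerm [DistribLattice α] [OrderBot α] {v : α → G}
    (hbot : v ⊥ = 0) (hv : ∀ a b, v (a ⊔ b) + v (a ⊓ b) = v a + v b) (s : Finset ι)
    (f : ι → α) :
    v (s.sup f) = ∑ t ∈ s.powerset, inclusionExclusionTerm v f t := by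
  classical
  induction s using Finset.induction_on generalizing f with
  | empty => simp [hbot, inclusionExclusionTerm_empty]
  | insert a s ha ih =>
    have hterm : ∀ t ∈ s.powerset, inclusionExclusionTerm v f (insert a t) =
        (if t = ∅ then v (f a) else 0) - inclusionExclusionTerm v (fun i ↦ f a ⊓ f i) t :=
      fun t ht ↦ inclusionExclusionTerm_insert v f fun hat ↦ ha (Finset.mem_powerset.1 ht hat)
    calc v ((insert a s).sup f)
      _ = v (s.sup f) + (v (f a) - v (s.sup fun i ↦ f a ⊓ f i)) := by
        rw [Finset.sup_insert, eq_sub_of_add_eq (hv (f a) (s.sup f)), Finset.sup_inf_distrib_left]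
        abel
      _ = _ := by
        rw [ih f, ih, Finset.sum_powerset_insert ha, Finset.sum_congr rfl hterm,
          Finset.sum_sub_distrib]
        simp

end InclusionExclusion

section PolynomialKernels

open LinearMap (ker)

lemma exists_isCoprime_eq_mul {R : Type*} [CommRing R] [IsDomain R] [IsBezout R] (f g : R) :
    ∃ c a b : R, IsCoprime a b ∧ f = c * a ∧ g = c * b := by
  classical
  let := IsBezout.toGCDDomain R
  obtain ⟨a, b, hf, hg, hab⟩ := extract_gcd f g
  exact ⟨gcd f g, a, b, (gcd_isUnit_iff a b).1 hab, hf, hg⟩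

section CommRing

variable {R M : Type*} [CommRing R] [AddCommGroup M] [Module R M] (φ : Module.End R M)

lemma ker_aeval_le_ker_aeval_of_dvd {f g : R[X]} (h : f ∣ g) :
    ker (aeval φ f) ≤ ker (aeval φ g) := by
  obtain ⟨c, rfl⟩ := h
  rw [mul_comm, map_mul]
  exact LinearMap.ker_le_ker_comp _ _

lemma aeval_apply_mem_ker_aeval {f : R[X]} (e : R[X]) {x : M} (hx : x ∈ ker (aeval φ f)) :
    aeval φ e x ∈ ker (aeval φ f) := by
  rw [LinearMap.mem_ker, ← Module.End.mul_apply, ← map_mul]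
  exact ker_aeval_le_ker_aeval_of_dvd φ (Dvd.intro e rfl) hx

lemma ker_aeval_mul_inf_ker_aeval_mul (c : R[X]) {a b : R[X]} (hab : IsCoprime a b) :
    ker (aeval φ (c * a)) ⊓ ker (aeval φ (c * b)) = ker (aeval φ c) := by
  refine le_antisymm ?_ (le_inf (ker_aeval_le_ker_aeval_of_dvd φ (Dvd.intro a rfl))
    (ker_aeval_le_ker_aeval_of_dvd φ (Dvd.intro b rfl)))
  rintro x ⟨hxa, hxb⟩
  obtain ⟨u, v, huv⟩ := hab
  have hc : c = u * (c * a) + v * (c * b) := by linear_combination -c * huv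
  rw [LinearMap.mem_ker, hc, map_add, map_mul _ u, map_mul _ v, LinearMap.add_apply,
    Module.End.mul_apply, Module.End.mul_apply, hxa, hxb, map_zero, map_zero, add_zero]

lemma exists_aeval_apply_mem_ker_aeval_mul (c : R[X]) {a b : R[X]} (hab : IsCoprime a b) :
    ∃ e : R[X], ∀ x ∈ ker (aeval φ (c * a * b)),
      aeval φ e x ∈ ker (aeval φ (c * a)) ∧ x - aeval φ e x ∈ ker (aeval φ (c * b)) := by
  obtain ⟨u, v, huv⟩ := hab
  refine ⟨v * b, fun x hx ↦ ?_⟩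
  have hsub : x - aeval φ (v * b) x = aeval φ (u * a) x := by
    rw [sub_eq_iff_eq_add, ← LinearMap.add_apply, ← map_add, huv, map_one, Module.End.one_apply]
  rw [hsub]
  simp only [LinearMap.mem_ker, ← Module.End.mul_apply, ← map_mul]
  exact ⟨ker_aeval_le_ker_aeval_of_dvd φ ⟨v, by ring⟩ hx,
    ker_aeval_le_ker_aeval_of_dvd φ ⟨u, by ring⟩ hx⟩

lemma ker_aeval_mul_sup_ker_aeval_mul (c : R[X]) {a b : R[X]} (hab : IsCoprime a b) :
    ker (aeval φ (c * a)) ⊔ ker (aeval φ (c * b)) = ker (aeval φ (c * a * b)) := by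
  refine le_antisymm (sup_le (ker_aeval_le_ker_aeval_of_dvd φ (Dvd.intro b rfl))
    (ker_aeval_le_ker_aeval_of_dvd φ ⟨a, by ring⟩)) fun x hx ↦ ?_
  obtain ⟨e, he⟩ := exists_aeval_apply_mem_ker_aeval_mul φ c hab
  obtain ⟨hxa, hxb⟩ := he x hx
  exact add_sub_cancel (aeval φ e x) x ▸ Submodule.add_mem_sup hxa hxb

end CommRing

variable {K V : Type*} [Field K] [AddCommGroup V] [Module K V] (φ : Module.End K V)

lemma exists_ker_aeval_inf_eq (f g : K[X]) :
    ∃ p : K[X], ker (aeval φ f) ⊓ ker (aeval φ g) = ker (aeval φ p) := by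
  obtain ⟨c, a, b, hab, rfl, rfl⟩ := exists_isCoprime_eq_mul f g
  exact ⟨c, ker_aeval_mul_inf_ker_aeval_mul φ c hab⟩

lemma exists_ker_aeval_sup_eq (f g : K[X]) :
    ∃ p : K[X], ker (aeval φ f) ⊔ ker (aeval φ g) = ker (aeval φ p) := by
  obtain ⟨c, a, b, hab, rfl, rfl⟩ := exists_isCoprime_eq_mul f g
  exact ⟨c * a * b, ker_aeval_mul_sup_ker_aeval_mul φ c hab⟩

-- A single polynomial in `φ` splits each element of the supremum, and it preserves `ker p(φ)`.
lemma ker_aeval_inf_sup_le (p f g : K[X]) :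
    ker (aeval φ p) ⊓ (ker (aeval φ f) ⊔ ker (aeval φ g)) ≤
      ker (aeval φ p) ⊓ ker (aeval φ f) ⊔ ker (aeval φ p) ⊓ ker (aeval φ g) := by
  obtain ⟨c, a, b, hab, rfl, rfl⟩ := exists_isCoprime_eq_mul f g
  rintro x ⟨hxp, hx⟩
  rw [ker_aeval_mul_sup_ker_aeval_mul φ c hab] at hx
  obtain ⟨e, he⟩ := exists_aeval_apply_mem_ker_aeval_mul φ c hab
  obtain ⟨hxa, hxb⟩ := he x hx
  have hep : aeval φ e x ∈ ker (aeval φ p) := aeval_apply_mem_ker_aeval φ e hxp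
  exact add_sub_cancel (aeval φ e x) x ▸
    Submodule.add_mem_sup ⟨hep, hxa⟩ ⟨Submodule.sub_mem _ hxp hep, hxb⟩

/-- The finite-dimensional kernels of polynomials in `φ`, as a sublattice of the lattice of
subspaces. Finite dimension is imposed so that `Module.finrank` is a modular function on it. -/
def kerAevalSublattice : Sublattice (Submodule K V) where
  carrier := {W | FiniteDimensional K W ∧ ∃ f : K[X], W = ker (aeval φ f)}
  supClosed' := by
    rintro _ ⟨hf, f, rfl⟩ _ ⟨hg, g, rfl⟩
    exact ⟨Submodule.finiteDimensional_sup _ _, exists_ker_aeval_sup_eq φ f g⟩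
  infClosed' := by
    rintro _ ⟨hf, f, rfl⟩ _ ⟨hg, g, rfl⟩
    exact ⟨Submodule.finiteDimensional_inf_left _ _, exists_ker_aeval_inf_eq φ f g⟩

namespace kerAevalSublattice

instance : DistribLattice (kerAevalSublattice φ) :=
  .ofInfSupLe <| by
    rintro ⟨_, _, p, rfl⟩ ⟨_, _, f, rfl⟩ ⟨_, _, g, rfl⟩
    exact ker_aeval_inf_sup_le φ p f g

instance : OrderBot (kerAevalSublattice φ) where
  bot := ⟨⊥, inferInstance, 1, by rw [map_one]; exact LinearMap.ker_id.symm⟩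
  bot_le W := bot_le (a := (W : Submodule K V))

variable {φ}

lemma coe_finset_sup {ι : Type*} (s : Finset ι) (f : ι → kerAevalSublattice φ) :
    ((s.sup f : kerAevalSublattice φ) : Submodule K V) = s.sup fun i ↦ (f i : Submodule K V) :=
  Finset.apply_sup_eq_sup_comp (fun W : kerAevalSublattice φ ↦ (W : Submodule K V))
    (fun _ _ ↦ rfl) rfl

lemma coe_finset_inf' {ι : Type*} {s : Finset ι} (hs : s.Nonempty)
    (f : ι → kerAevalSublattice φ) :
    ((s.inf' hs f : kerAevalSublattice φ) : Submodule K V) =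
      s.inf fun i ↦ (f i : Submodule K V) := by
  rw [← Finset.inf'_eq_inf hs]
  exact Finset.apply_inf'_eq_inf'_comp hs (fun W : kerAevalSublattice φ ↦ (W : Submodule K V))
    fun _ _ ↦ rfl

lemma finrank_sup_add_finrank_inf (W₁ W₂ : kerAevalSublattice φ) :
    (Module.finrank K (W₁ ⊔ W₂ : Submodule K V) : ℤ) + Module.finrank K (W₁ ⊓ W₂ : Submodule K V) =
      Module.finrank K W₁ + Module.finrank K W₂ := by
  have := W₁.2.1
  have := W₂.2.1
  exact_mod_cast Submodule.finrank_sup_add_finrank_inf_eq (W₁ : Submodule K V) W₂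

theorem finrank_finset_sup {ι : Type*} (s : Finset ι) (f : ι → kerAevalSublattice φ) :
    (Module.finrank K (s.sup f : kerAevalSublattice φ) : ℤ) = ∑ t ∈ s.powerset,
      inclusionExclusionTerm (fun W : kerAevalSublattice φ ↦ (Module.finrank K W : ℤ)) f t :=
  map_finset_sup_eq_sum_inclusionExclusionTerm
    (v := fun W : kerAevalSublattice φ ↦ (Module.finrank K W : ℤ))
    (Nat.cast_eq_zero.2 (finrank_bot K V)) finrank_sup_add_finrank_inf s f

end kerAevalSublattice

end PolynomialKernels

section FrobeniusFixed

variable (F K : Type*) [Field F] [Fintype F]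

/-- The elements of `K` fixed by the `d`-th power of the `q`-Frobenius, `q = #F`, as an
`F`-subspace. For separably closed `K` and `0 < d` this is the subfield `F_{q^d}`; for `d = 0` it
is all of `K`. -/
def frobeniusFixed [CommRing K] [Algebra F K] (d : ℕ) : Submodule F K :=
  LinearMap.eqLocus ((FiniteField.frobeniusAlgHom F K).toLinearMap ^ d) 1

section CommRing

variable {F K} [CommRing K] [Algebra F K]

lemma mem_frobeniusFixed_iff_isPeriodicPt {d : ℕ} {x : K} :
    x ∈ frobeniusFixed F K d ↔ Function.IsPeriodicPt (· ^ Fintype.card F) d x := by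
  rw [frobeniusFixed, LinearMap.mem_eqLocus, Module.End.coe_pow]
  rfl

lemma mem_frobeniusFixed {d : ℕ} {x : K} :
    x ∈ frobeniusFixed F K d ↔ x ^ Fintype.card F ^ d = x := by
  rw [mem_frobeniusFixed_iff_isPeriodicPt, Function.IsPeriodicPt, pow_iterate,
    Function.IsFixedPt]

variable (F K)

lemma frobeniusFixed_eq_ker_aeval (d : ℕ) : frobeniusFixed F K d =
    LinearMap.ker (aeval (FiniteField.frobeniusAlgHom F K).toLinearMap (X ^ d - 1 : F[X])) := by
  rw [frobeniusFixed, LinearMap.eqLocus_eq_ker_sub, map_sub, map_pow, aeval_X, map_one]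

lemma frobeniusFixed_inf (m n : ℕ) :
    frobeniusFixed F K m ⊓ frobeniusFixed F K n = frobeniusFixed F K (m.gcd n) := by
  ext x
  simp only [Submodule.mem_inf, mem_frobeniusFixed_iff_isPeriodicPt]
  exact ⟨fun h ↦ h.1.gcd h.2,
    fun h ↦ ⟨h.trans_dvd (m.gcd_dvd_left n), h.trans_dvd (m.gcd_dvd_right n)⟩⟩

lemma finset_inf_frobeniusFixed {ι : Type*} (t : Finset ι) (d : ι → ℕ) :
    (t.inf fun i ↦ frobeniusFixed F K (d i)) = frobeniusFixed F K (t.gcd d) := by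
  classical
  induction t using Finset.induction_on with
  | empty => ext; simp [mem_frobeniusFixed]
  | insert a s _ ih =>
    rw [Finset.inf_insert, Finset.gcd_insert, ih, frobeniusFixed_inf]
    rfl

end CommRing

lemma separable_X_pow_card_pow_sub_X {d : ℕ} (hd : 0 < d) :
    (X ^ Fintype.card F ^ d - X : F[X]).Separable := by
  obtain ⟨p, hp⟩ := CharP.exists F
  refine galois_poly_separable p _ (dvd_pow ?_ hd.ne')
  exact (CharP.cast_eq_zero_iff F p _).1 (FiniteField.cast_card_eq_zero F)

variable [Field K] [Algebra F K] [IsSepClosed K]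

lemma natCard_frobeniusFixed {d : ℕ} (hd : 0 < d) :
    Nat.card (frobeniusFixed F K d) = Fintype.card F ^ d := by
  have hq : 1 < Fintype.card F := Fintype.one_lt_card
  have hsep := separable_X_pow_card_pow_sub_X F hd
  have hroots := card_rootSet_eq_natDegree hsep
    (IsSepClosed.splits_of_separable _ (hsep.map (f := algebraMap F K)))
  rw [FiniteField.X_pow_card_pow_sub_X_natDegree_eq F hd.ne' hq,
    ← Nat.card_eq_fintype_card] at hroots
  rw [← hroots]
  refine Nat.card_congr (Equiv.subtypeEquivRight fun x ↦ ?_)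
  rw [mem_frobeniusFixed, mem_rootSet_of_ne hsep.ne_zero]
  simp [sub_eq_zero]

lemma finiteDimensional_frobeniusFixed {d : ℕ} (hd : 0 < d) :
    FiniteDimensional F (frobeniusFixed F K d) := by
  have : Finite (frobeniusFixed F K d) := Nat.finite_of_card_ne_zero <| by
    rw [natCard_frobeniusFixed F K hd]
    exact pow_ne_zero d Fintype.card_ne_zero
  exact Module.Finite.of_finite

lemma finrank_frobeniusFixed {d : ℕ} (hd : 0 < d) :
    Module.finrank F (frobeniusFixed F K d) = d := by
  have := finiteDimensional_frobeniusFixed F K hd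
  have hcard := Module.natCard_eq_pow_finrank (K := F) (V := frobeniusFixed F K d)
  rw [natCard_frobeniusFixed F K hd, Nat.card_eq_fintype_card] at hcard
  exact (Nat.pow_right_injective Fintype.one_lt_card hcard).symm

theorem finrank_finset_sup_frobeniusFixed {ι : Type*} (s : Finset ι) {d : ι → ℕ}
    (hd : ∀ i, 0 < d i) :
    (Module.finrank F (s.sup fun i ↦ frobeniusFixed F K (d i) : Submodule F K) : ℤ) =
      ∑ t ∈ s.powerset, (-1 : ℤ) ^ (t.card + 1) * (t.gcd d : ℕ) := by
  let W (i : ι) : kerAevalSublattice (FiniteField.frobeniusAlgHom F K).toLinearMap :=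
    ⟨frobeniusFixed F K (d i), finiteDimensional_frobeniusFixed F K (hd i),
      X ^ d i - 1, frobeniusFixed_eq_ker_aeval F K (d i)⟩
  have hsup := kerAevalSublattice.finrank_finset_sup s W
  rw [kerAevalSublattice.coe_finset_sup] at hsup
  rw [hsup]
  refine Finset.sum_congr rfl fun t _ ↦ ?_
  obtain rfl | ht := t.eq_empty_or_nonempty
  · simp [inclusionExclusionTerm_empty]
  · have hgcd : 0 < t.gcd d :=
      let ⟨i, hi⟩ := ht
      Nat.pos_of_dvd_of_pos (Finset.gcd_dvd hi) (hd i)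
    rw [inclusionExclusionTerm_of_nonempty _ _ ht, kerAevalSublattice.coe_finset_inf',
      finset_inf_frobeniusFixed, finrank_frobeniusFixed F K hgcd, smul_eq_mul]

end FrobeniusFixed

/-- The empty set may be included in the sum because `Finset.gcd ∅ d = 0`. -/
lemma lambdaSum_eq_sum_powerset {k : ℕ} (d : Fin k → ℕ) :
    lambdaSum d = ∑ t ∈ (Finset.univ : Finset (Fin k)).powerset,
      (-1 : ℤ) ^ (t.card + 1) * (t.gcd d : ℕ) := by
  obtain rfl | hk := k.eq_zero_or_pos
  · simp [lambdaSum]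
  have hrange : Finset.range (k + 1) = insert 0 (insert 1 (Finset.Icc 2 k)) := by
    ext j
    simp only [Finset.mem_range, Finset.mem_insert, Finset.mem_Icc]
    lia
  have hcard (j : ℕ) : ∑ t ∈ Finset.powersetCard j (Finset.univ : Finset (Fin k)),
        (-1 : ℤ) ^ (t.card + 1) * (t.gcd d : ℕ) =
      (-1 : ℤ) ^ (j + 1) * ∑ t ∈ Finset.powersetCard j Finset.univ, ((t.gcd d : ℕ) : ℤ) := by
    rw [Finset.mul_sum]
    exact Finset.sum_congr rfl fun t ht ↦ by rw [(Finset.mem_powersetCard.1 ht).2]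
  rw [Finset.sum_powerset, Finset.card_univ, Fintype.card_fin, hrange]
  simp [hcard, lambdaSum, Finset.powersetCard_one]

/-- This is Lagrange's theorem for the summation map `∏ i, W i → ⨆ i, W i`. -/
lemma natCard_sum_eq_zero_mul_natCard_sup {R M ι : Type*} [Ring R] [AddCommGroup M] [Module R M]
    [Fintype ι] (W : ι → Submodule R M) :
    Nat.card {x : ι → M // (∀ i, x i ∈ W i) ∧ ∑ i, x i = 0} *
        Nat.card (Finset.univ.sup W : Submodule R M) = ∏ i, Nat.card (W i) := by
  let S : (∀ i, W i) →ₗ[R] M := ∑ i, (W i).subtype ∘ₗ LinearMap.proj i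
  have hS (x : ∀ i, W i) : S x = ∑ i, (x i : M) := by simp [S]
  have hrange : LinearMap.range S = Finset.univ.sup W := by
    ext x
    rw [Finset.sup_eq_iSup, Submodule.mem_iSup_finset_iff_exists_sum, LinearMap.mem_range]
    simp only [hS]
  let e : {x : ι → M // (∀ i, x i ∈ W i) ∧ ∑ i, x i = 0} ≃ LinearMap.ker S :=
    { toFun x := ⟨fun i ↦ ⟨x.1 i, x.2.1 i⟩, (hS _).trans x.2.2⟩
      invFun y := ⟨fun i ↦ y.1 i, fun i ↦ (y.1 i).2, (hS _).symm.trans y.2⟩ }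
  rw [← Nat.card_pi, Submodule.card_eq_card_quotient_mul_card (LinearMap.ker S),
    Nat.card_congr e, Nat.card_congr S.quotKerEquivRange.toEquiv, hrange, mul_comm]

theorem zero_sum_count_general (F K : Type*) [Field F] [Fintype F] [Field K] [Algebra F K]
    [IsSepClosed K] {k : ℕ} (d : Fin k → ℕ) (hd : ∀ i, 0 < d i) :
    (Nat.card {x : Fin k → K //
        (∀ i, x i ^ Fintype.card F ^ (d i) = x i) ∧ ∑ i, x i = 0} : ℚ) =
      (Fintype.card F : ℚ) ^ ((∑ i, (d i : ℤ)) - lambdaSum d) := by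
  let U : Submodule F K := Finset.univ.sup fun i ↦ frobeniusFixed F K (d i)
  have hq : (Fintype.card F : ℚ) ≠ 0 := Nat.cast_ne_zero.2 Fintype.card_ne_zero
  have : FiniteDimensional F U :=
    have (i : Fin k) := finiteDimensional_frobeniusFixed F K (hd i)
    Submodule.finite_finset_sup _ _
  have hU : (Nat.card U : ℚ) = (Fintype.card F : ℚ) ^ lambdaSum d := by
    rw [Module.natCard_eq_pow_finrank (K := F), Nat.card_eq_fintype_card, lambdaSum_eq_sum_powerset,
      ← finrank_finset_sup_frobeniusFixed F K Finset.univ hd, zpow_natCast, Nat.cast_pow]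
  have hcount := natCard_sum_eq_zero_mul_natCard_sup fun i ↦ frobeniusFixed F K (d i)
  rw [Finset.prod_congr rfl fun i _ ↦ natCard_frobeniusFixed F K (hd i),
    Finset.prod_pow_eq_pow_sum] at hcount
  simp only [mem_frobeniusFixed] at hcount
  rw [zpow_sub₀ hq, eq_div_iff (zpow_ne_zero _ hq), ← hU, ← Nat.cast_sum, zpow_natCast]
  exact_mod_cast hcount

/-- **Corollary 2 (counting part).** For `k > 1` and positive integers `d₁, …, d_k`, the number
of tuples `(x₁, …, x_k)` with `xᵢ ∈ F_{q^{dᵢ}}` and `x₁ + ⋯ + x_k = 0` equals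
`q^(d₁ + ⋯ + d_k - λ(d₁, …, d_k))`. -/
theorem zero_sum_count
    (F : Type*) [Field F] [Fintype F]
    (q : ℕ) (hq : q = Fintype.card F)
    {k : ℕ} (hk : 1 < k)
    (d : Fin k → ℕ) (hd : ∀ i, 0 < d i) :
    (Nat.card {x : Fin k → AlgebraicClosure F //
        (∀ i, x i ^ q ^ (d i) = x i) ∧ ∑ i, x i = 0} : ℚ) =
      (q : ℚ) ^ ((∑ i, (d i : ℤ)) - lambdaSum d) := by
  subst hq
  exact zero_sum_count_general F (AlgebraicClosure F) d hd
end

section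
/- Let q be a prime power, let n > 1 be an integer, let d_1, …, d_k be distinct divisors of n, and let (β_1, …, β_k) be a tuple with β_i ∈ F_{q^{d_i}} for each i. Assume that Tr_{d_i/gcd(d_i,d_j)}(β_i) = Tr_{d_j/gcd(d_i,d_j)}(β_j) for all 1 ≤ i < j ≤ k. Then the number of elements α ∈ F_{q^n} satisfying Tr_{n/d_i}(α) = β_i for all 1 ≤ i ≤ k equals q^{n − λ(d_1, …, d_k)}, where λ(d_1, …, d_k) = ∑_{i=1}^k d_i + ∑_{j=2}^k (−1)^{j+1} ∑_{1 ≤ i_1 < ⋯ < i_j ≤ k} gcd(d_{i_1}, …, d_{i_j}). -/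
open Polynomial

/-- The trace map `Tr_{n/m} : F_{q^n} → F_{q^m}`, `Tr_{n/m}(α) = ∑_{j=0}^{n/m-1} α^{q^{mj}}`,
viewed as a function on the algebraic closure of `F` (where `q = Fintype.card F`). -/
noncomputable def trMap (F : Type*) [Field F] [Fintype F] (n m : ℕ)
    (α : AlgebraicClosure F) : AlgebraicClosure F :=
  ∑ j ∈ Finset.range (n / m), α ^ (Fintype.card F) ^ (m * j)

/-
The Frobenius `α ↦ α ^ q` makes a separably closed extension `K` of `F` a module over `F[X]`, in
which `X ^ d - 1` cuts out `F_{q^d}` and `Tr_{n/d}` is the action of `(X ^ n - 1) / (X ^ d - 1)`. A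
polynomial `f` with `f(0) ≠ 0` acts surjectively, with a kernel of `q ^ deg f` elements, because its
linearized polynomial is separable. This applies to
`Q = gcdᵢ (X ^ n - 1) / (X ^ dᵢ - 1) = (X ^ n - 1) / lcmᵢ (X ^ dᵢ - 1)`: by Bézout, the pairwise
compatibility of the `βᵢ` makes the system `Tr_{n/dᵢ}(α) = βᵢ` solvable, and its solutions form a
coset of the kernel of `Q`. The degree of the lcm is computed from the degrees of the gcds
`X ^ gcd(d_{i₁}, …, d_{i_j}) - 1` by inclusion-exclusion on multisets of irreducible factors.
-/

section InclusionExclusion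

variable {ι α : Type*} [DecidableEq α]

theorem sum_toEnumFinset_fst {G : Type*} [AddCommMonoid G] (m : Multiset α) (w : α → G) :
    ∑ p ∈ m.toEnumFinset, w p.1 = (m.map w).sum := by
  conv_rhs => rw [← m.map_toEnumFinset_fst, Multiset.map_map]
  rfl

theorem toEnumFinset_finset_sup (s : Finset ι) (m : ι → Multiset α) :
    (s.sup m).toEnumFinset = s.biUnion fun i => (m i).toEnumFinset := by
  ext p
  simp [Multiset.count_finset_sup, Finset.lt_sup_iff]

theorem toEnumFinset_finset_inf' {t : Finset ι} (ht : t.Nonempty) (m : ι → Multiset α) :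
    (t.inf' ht m).toEnumFinset = t.inf' ht fun i => (m i).toEnumFinset := by
  refine Finset.apply_inf'_eq_inf'_comp ht Multiset.toEnumFinset fun u v => ?_
  ext p
  simp [Multiset.count_inter]

theorem inclusion_exclusion_sum_map_sup {G : Type*} [AddCommGroup G] (s : Finset ι)
    (m : ι → Multiset α) (w : α → G) :
    ((s.sup m).map w).sum = ∑ t : s.powerset.filter (·.Nonempty),
      (-1) ^ (t.1.card + 1) • ((t.1.inf' (Finset.mem_filter.1 t.2).2 m).map w).sum := by
  simp only [← sum_toEnumFinset_fst, toEnumFinset_finset_sup, toEnumFinset_finset_inf',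
    Finset.inclusion_exclusion_sum_biUnion]

end InclusionExclusion

section NormalizedFactors

open UniqueFactorizationMonoid

variable {R : Type*} [CommMonoidWithZero R] [NormalizationMonoid R] [UniqueFactorizationMonoid R]

theorem normalizedFactors_prod_of_le {u : Multiset R} {x : R} (h : u ≤ normalizedFactors x) :
    normalizedFactors u.prod = u := by
  rw [normalizedFactors_prod_eq u fun a ha =>
    irreducible_of_normalized_factor a (Multiset.mem_of_le h ha)]
  exact (Multiset.map_congr rfl fun a ha =>
    normalize_normalized_factor a (Multiset.mem_of_le h ha)).trans (Multiset.map_id u)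

theorem prod_dvd_iff_of_le_normalizedFactors {u : Multiset R} {x y : R}
    (hu : u ≤ normalizedFactors x) (hy : y ≠ 0) : u.prod ∣ y ↔ u ≤ normalizedFactors y := by
  have : Nontrivial R := ⟨y, 0, hy⟩
  rw [dvd_iff_normalizedFactors_le_normalizedFactors
    (prod_ne_zero_of_subset_normalizedFactors (Multiset.subset_of_le hu)) hy,
    normalizedFactors_prod_of_le hu]

variable {ι : Type*} [DecidableEq R]

theorem normalizedFactors_eq_sup {s : Finset ι} {f : ι → R} {L : R} (hL0 : L ≠ 0)
    (hL : ∀ m, L ∣ m ↔ ∀ i ∈ s, f i ∣ m) :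
    normalizedFactors L = s.sup fun i => normalizedFactors (f i) := by
  have hf : ∀ i ∈ s, f i ∣ L := (hL L).1 dvd_rfl
  have hf0 : ∀ i ∈ s, f i ≠ 0 := fun i hi => ne_zero_of_dvd_ne_zero hL0 (hf i hi)
  have hle : (s.sup fun i => normalizedFactors (f i)) ≤ normalizedFactors L :=
    Finset.sup_le fun i hi =>
      (dvd_iff_normalizedFactors_le_normalizedFactors (hf0 i hi) hL0).1 (hf i hi)
  have : Nontrivial R := ⟨L, 0, hL0⟩
  have hprod0 := prod_ne_zero_of_subset_normalizedFactors (Multiset.subset_of_le hle)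
  refine le_antisymm ?_ hle
  rw [← normalizedFactors_prod_of_le hle,
    ← dvd_iff_normalizedFactors_le_normalizedFactors hL0 hprod0, hL]
  intro i hi
  rw [dvd_iff_normalizedFactors_le_normalizedFactors (hf0 i hi) hprod0,
    normalizedFactors_prod_of_le hle]
  exact Finset.le_sup (f := fun i => normalizedFactors (f i)) hi

theorem normalizedFactors_eq_inf' {t : Finset ι} (ht : t.Nonempty) {f : ι → R} {g : R}
    (hf : ∀ i ∈ t, f i ≠ 0) (hg : ∀ m, m ∣ g ↔ ∀ i ∈ t, m ∣ f i) :
    normalizedFactors g = t.inf' ht fun i => normalizedFactors (f i) := by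
  obtain ⟨j, hj⟩ := ht
  have hgf : ∀ i ∈ t, g ∣ f i := (hg g).1 dvd_rfl
  have hg0 : g ≠ 0 := ne_zero_of_dvd_ne_zero (hf j hj) (hgf j hj)
  refine le_antisymm (Finset.le_inf' _ _ fun i hi =>
    (dvd_iff_normalizedFactors_le_normalizedFactors hg0 (hf i hi)).1 (hgf i hi)) ?_
  have hle : ∀ i ∈ t, (t.inf' ⟨j, hj⟩ fun i => normalizedFactors (f i)) ≤ normalizedFactors (f i) :=
    fun i hi => Finset.inf'_le _ hi
  rw [← prod_dvd_iff_of_le_normalizedFactors (hle j hj) hg0, hg]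
  exact fun i hi => (prod_dvd_iff_of_le_normalizedFactors (hle j hj) (hf i hi)).2 (hle i hi)

end NormalizedFactors

section Degree

variable {F ι : Type*} [Field F]

theorem natDegree_eq_sum_natDegree_normalizedFactors [DecidableEq F] (f : F[X]) :
    f.natDegree = ((UniqueFactorizationMonoid.normalizedFactors f).map natDegree).sum := by
  rcases eq_or_ne f 0 with rfl | hf
  · simp
  · rw [← natDegree_multiset_prod _
      (UniqueFactorizationMonoid.zero_notMem_normalizedFactors f)]
    exact natDegree_eq_of_degree_eq (degree_eq_degree_of_associated
      (UniqueFactorizationMonoid.prod_normalizedFactors hf)).symm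

theorem natDegree_lcm_eq_sum_natDegree_gcd {s : Finset ι} {f : ι → F[X]} {L : F[X]} (hL0 : L ≠ 0)
    (hL : ∀ m, L ∣ m ↔ ∀ i ∈ s, f i ∣ m) {g : Finset ι → F[X]}
    (hg : ∀ t ⊆ s, ∀ m, m ∣ g t ↔ ∀ i ∈ t, m ∣ f i) :
    (L.natDegree : ℤ) =
      ∑ t ∈ s.powerset with t.Nonempty, (-1) ^ (t.card + 1) * ((g t).natDegree : ℤ) := by
  classical
  have hf0 : ∀ i ∈ s, f i ≠ 0 := fun i hi => ne_zero_of_dvd_ne_zero hL0 ((hL L).1 dvd_rfl i hi)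
  have hdeg : ∀ f : F[X], (f.natDegree : ℤ) =
      ((UniqueFactorizationMonoid.normalizedFactors f).map fun p => (p.natDegree : ℤ)).sum := by
    intro f
    rw [natDegree_eq_sum_natDegree_normalizedFactors, Nat.cast_multiset_sum, Multiset.map_map]
    rfl
  rw [hdeg, normalizedFactors_eq_sup hL0 hL, inclusion_exclusion_sum_map_sup]
  refine (Finset.sum_congr rfl fun ⟨t, ht⟩ _ => ?_).trans (Finset.sum_coe_sort _
    fun t : Finset ι => (-1) ^ (t.card + 1) * ((g t).natDegree : ℤ))
  obtain ⟨hts, hne⟩ := Finset.mem_filter.1 ht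
  rw [Finset.mem_powerset] at hts
  rw [hdeg (g t), normalizedFactors_eq_inf' hne (fun i hi => hf0 i (hts hi)) (hg t hts),
    smul_eq_mul]

end Degree

section PowSubOne

variable {R : Type*} [CommRing R]

theorem dvd_pow_sub_one_iff_orderOf_dvd (y x : R) (m : ℕ) :
    y ∣ x ^ m - 1 ↔ orderOf (Ideal.Quotient.mk (Ideal.span {y}) x) ∣ m := by
  rw [orderOf_dvd_iff_pow_eq_one, ← Ideal.mem_span_singleton, ← Ideal.Quotient.eq_zero_iff_mem,
    map_sub, map_pow, map_one, sub_eq_zero]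

theorem dvd_pow_gcd_sub_one_iff {y x : R} {a b : ℕ} :
    y ∣ x ^ a.gcd b - 1 ↔ y ∣ x ^ a - 1 ∧ y ∣ x ^ b - 1 := by
  simp only [dvd_pow_sub_one_iff_orderOf_dvd, Nat.dvd_gcd_iff]

theorem dvd_pow_finset_gcd_sub_one_iff {ι : Type*} {y x : R} {t : Finset ι} {d : ι → ℕ} :
    y ∣ x ^ t.gcd d - 1 ↔ ∀ i ∈ t, y ∣ x ^ d i - 1 := by
  simp only [dvd_pow_sub_one_iff_orderOf_dvd, Finset.dvd_gcd_iff]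

end PowSubOne

/-- The sum `∑ (-1) ^ (j + 1) gcd(d_{i₁}, …, d_{i_j})` over the nonempty subsets
`{i₁, …, i_j}` of the index type: the inclusion-exclusion form of `λ`. -/
def alternatingGcdSum {ι : Type*} [Fintype ι] (d : ι → ℕ) : ℤ :=
  ∑ t : Finset ι with t.Nonempty, (-1) ^ (t.card + 1) * ((t.gcd d : ℕ) : ℤ)

theorem alternatingGcdSum_of_isEmpty {ι : Type*} [Fintype ι] [IsEmpty ι] (d : ι → ℕ) :
    alternatingGcdSum d = 0 :=
  Finset.sum_eq_zero fun t ht => by simp [t.eq_empty_of_isEmpty] at ht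

theorem natDegree_X_pow_sub_one {R : Type*} [Ring R] [Nontrivial R] (n : ℕ) :
    (X ^ n - 1 : R[X]).natDegree = n :=
  natDegree_X_pow_sub_C (r := (1 : R))

theorem X_pow_sub_one_ne_zero (R : Type*) [Ring R] [Nontrivial R] {n : ℕ} (hn : n ≠ 0) :
    (X ^ n - 1 : R[X]) ≠ 0 :=
  X_pow_sub_C_ne_zero hn.bot_lt 1

theorem coeff_zero_ne_zero_of_dvd_X_pow_sub_one {R : Type*} [Ring R] [Nontrivial R] {n : ℕ}
    (hn : n ≠ 0) {f : R[X]} (hf : f ∣ X ^ n - 1) : f.coeff 0 ≠ 0 := by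
  obtain ⟨g, hg⟩ := hf
  intro hf0
  have := congrArg (coeff · 0) hg
  simp [mul_coeff_zero, hf0, coeff_X_pow, hn.symm] at this

theorem natDegree_lcm_X_pow_sub_one {F ι : Type*} [Field F] [Fintype ι] {d : ι → ℕ} {L : F[X]}
    (hL0 : L ≠ 0) (hL : ∀ m, L ∣ m ↔ ∀ i, X ^ d i - 1 ∣ m) :
    (L.natDegree : ℤ) = alternatingGcdSum d := by
  simpa only [alternatingGcdSum, natDegree_X_pow_sub_one, Finset.powerset_univ] using
    natDegree_lcm_eq_sum_natDegree_gcd (s := Finset.univ) (g := fun t => X ^ t.gcd d - 1) hL0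
      (by simpa using hL) fun _ _ _ => dvd_pow_finset_gcd_sub_one_iff

theorem lambdaSum_eq_alternatingGcdSum {k : ℕ} (d : Fin k → ℕ) :
    lambdaSum d = alternatingGcdSum d := by
  let c (j : ℕ) : ℤ := (-1) ^ (j + 1) *
    ∑ t ∈ Finset.powersetCard j (Finset.univ : Finset (Fin k)), ((t.gcd d : ℕ) : ℤ)
  have hsum : alternatingGcdSum d = ∑ j ∈ Finset.range (k + 1), c j := by
    rw [alternatingGcdSum, Finset.sum_filter_of_ne, ← Finset.powerset_univ, Finset.sum_powerset,
      Finset.card_fin]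
    · refine Finset.sum_congr rfl fun j _ => ?_
      simp only [c, Finset.mul_sum]
      exact Finset.sum_congr rfl fun t ht => by rw [(Finset.mem_powersetCard.1 ht).2]
    · intro t _ ht
      contrapose! ht
      simp [ht]
  have hc0 : c 0 = 0 := by simp [c]
  have hc1 : c 1 = ∑ i, (d i : ℤ) := by simp [c, Finset.powersetCard_one]
  rw [hsum]
  rcases k with _ | k
  · simp [lambdaSum, hc0]
  · have hrange : Finset.range (k + 2) = insert 0 (insert 1 (Finset.Icc 2 (k + 1))) := by
      ext j
      simp only [Finset.mem_range, Finset.mem_insert, Finset.mem_Icc]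
      omega
    rw [hrange, Finset.sum_insert (by simp), Finset.sum_insert (by simp), hc0, hc1, zero_add,
      lambdaSum]

section LinearSystem

variable {R M ι : Type*} [CommRing R] [AddCommGroup M] [Module R M] {g : ι → R} {Q : R}

theorem forall_smul_eq_zero_iff (hQ : Ideal.span (Set.range g) = Ideal.span {Q}) (x : M) :
    (∀ i, g i • x = 0) ↔ Q • x = 0 := by
  rw [← Ideal.mem_torsionOf_iff, ← Ideal.span_singleton_le_iff_mem, ← hQ, Ideal.span_le,
    Set.range_subset_iff]
  rfl

theorem card_forall_smul_eq (hQ : Ideal.span (Set.range g) = Ideal.span {Q}) {β : ι → M} {x₀ : M}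
    (hx₀ : ∀ i, g i • x₀ = β i) :
    Nat.card {x : M // ∀ i, g i • x = β i} = Nat.card (Submodule.torsionBy R M Q) := by
  refine Nat.card_congr ((Equiv.subRight x₀).subtypeEquiv fun x => ?_)
  rw [Submodule.mem_torsionBy_iff, ← forall_smul_eq_zero_iff hQ]
  simp [smul_sub, hx₀, sub_eq_zero]

variable [IsDomain R]

theorem exists_forall_smul_eq [Finite ι] (hQ : Ideal.span (Set.range g) = Ideal.span {Q})
    (hQ0 : Q ≠ 0) (hdiv : Function.Surjective fun x : M => Q • x) {β : ι → M}
    (hβ : ∀ i j a b, a * g i = b * g j → a • β i = b • β j) :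
    ∃ x : M, ∀ i, g i • x = β i := by
  cases nonempty_fintype ι
  have hgQ (i : ι) : Q ∣ g i :=
    Ideal.mem_span_singleton.1 (hQ ▸ Ideal.subset_span (Set.mem_range_self i))
  choose e he using hgQ
  obtain ⟨c, hc⟩ := Ideal.mem_span_range_iff_exists_fun.1 (hQ ▸ Ideal.mem_span_singleton_self Q)
  have hce : ∑ j, c j * e j = 1 := by
    refine mul_left_cancel₀ hQ0 ?_
    rw [mul_one, Finset.mul_sum]
    conv_rhs => rw [← hc]
    exact Finset.sum_congr rfl fun j _ => by rw [he j, mul_left_comm]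
  obtain ⟨x, hx : Q • x = ∑ j, c j • β j⟩ := hdiv (∑ j, c j • β j)
  refine ⟨x, fun i => ?_⟩
  calc g i • x = ∑ j, e i • c j • β j := by
        rw [he, mul_comm, mul_smul, hx, Finset.smul_sum]
    _ = ∑ j, (c j * e j) • β i := by
        refine Finset.sum_congr rfl fun j _ => ?_
        rw [smul_comm, mul_smul, hβ j i (e i) (e j) (by rw [he i, he j]; ring)]
    _ = β i := by rw [← Finset.sum_smul, hce, one_smul]

end LinearSystem

section CofactorIdeal

variable {R ι : Type*} [CommRing R]

theorem exists_forall_dvd_iff [IsPrincipalIdealRing R] (f : ι → R) :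
    ∃ L, ∀ m, L ∣ m ↔ ∀ i, f i ∣ m := by
  obtain ⟨L, hL⟩ := IsPrincipalIdealRing.principal (⨅ i, Ideal.span {f i})
  refine ⟨L, fun m => ?_⟩
  rw [← Ideal.mem_span_singleton, Ideal.span, ← hL]
  simp only [Submodule.mem_iInf, Ideal.mem_span_singleton]

variable [IsDomain R]

theorem exists_eq_mul_of_mul_eq_mul {u v g g' a b : R} (huv : IsCoprime u v) (hu : u ≠ 0)
    (hg' : g' ≠ 0) (hug : u * g = v * g') (hab : a * g = b * g') : ∃ c, a = c * u ∧ b = c * v := by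
  have hav : a * v = b * u := by
    refine mul_right_cancel₀ hg' ?_
    linear_combination u * hab - a * hug
  obtain ⟨c, rfl⟩ : u ∣ a := huv.dvd_of_dvd_mul_right ⟨b, by rw [hav, mul_comm]⟩
  exact ⟨c, mul_comm u c, mul_right_cancel₀ hu (by rw [← hav]; ring)⟩

theorem isCoprime_of_forall_dvd_mul [IsBezout R] {h u v : R} (hh : h ≠ 0)
    (hgcd : ∀ y, y ∣ h * u → y ∣ h * v → y ∣ h) : IsCoprime u v := by
  refine IsRelPrime.isCoprime fun y hyu hyv => ?_
  obtain ⟨c, hc⟩ := hgcd (h * y) (mul_dvd_mul_left h hyu) (mul_dvd_mul_left h hyv)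
  exact IsUnit.of_mul_eq_one c (mul_left_cancel₀ hh (by rw [← mul_assoc, ← hc, mul_one]))

theorem span_range_cofactor [IsPrincipalIdealRing R] [Nonempty ι] {f g : ι → R} {N L Q : R}
    (hN : N ≠ 0) (hfg : ∀ i, f i * g i = N) (hL : ∀ m, L ∣ m ↔ ∀ i, f i ∣ m) (hLQ : L * Q = N) :
    Ideal.span (Set.range g) = Ideal.span {Q} := by
  have hL0 : L ≠ 0 := by rintro rfl; exact hN (by rw [← hLQ, zero_mul])
  refine le_antisymm (Ideal.span_le.2 (Set.range_subset_iff.2 fun i => ?_)) ?_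
  · obtain ⟨c, hc⟩ := (hL L).1 dvd_rfl i
    have hf0 : f i ≠ 0 := by rintro h0; exact hN (by rw [← hfg i, h0, zero_mul])
    refine Ideal.mem_span_singleton.2 ⟨c, mul_left_cancel₀ hf0 ?_⟩
    rw [hfg, ← hLQ, hc]
    ring
  · obtain ⟨D, hD⟩ := IsPrincipalIdealRing.principal (Ideal.span (Set.range g))
    replace hD : Ideal.span (Set.range g) = Ideal.span {D} := hD
    have hgD (i : ι) : D ∣ g i :=
      Ideal.mem_span_singleton.1 (hD ▸ Ideal.subset_span (Set.mem_range_self i))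
    obtain ⟨E, hE⟩ : D ∣ N := by
      rw [← hfg (Classical.arbitrary ι)]
      exact (hgD _).mul_left _
    have hD0 : D ≠ 0 := by rintro rfl; exact hN (by rw [hE, zero_mul])
    have hfE (i : ι) : f i ∣ E := by
      obtain ⟨c, hc⟩ := hgD i
      exact ⟨c, mul_left_cancel₀ hD0 (by rw [← hE, ← hfg i, hc]; ring)⟩
    obtain ⟨c, rfl⟩ := (hL E).2 hfE
    rw [hD, Ideal.span_singleton_le_iff_mem]
    exact Ideal.mem_span_singleton.2 ⟨c, mul_left_cancel₀ hL0 (by rw [hLQ, hE]; ring)⟩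

end CofactorIdeal

section Frobenius

variable (F K : Type*) [Field F] [Fintype F] [Field K] [Algebra F K]

/-- The extension `K` of the finite field `F` as an `F[X]`-module on which `X` acts by the Frobenius
`α ↦ α ^ q`, where `q = Fintype.card F`. -/
abbrev FrobeniusModule : Type _ :=
  Module.AEval' (FiniteField.frobeniusAlgHom F K).toLinearMap

variable {F}

/-- The `q`-linearized polynomial `∑ aᵢ X ^ (q ^ i)` attached to `f = ∑ aᵢ X ^ i`. Evaluating it
at `α` gives the action of `f` on `α` in `FrobeniusModule F K`. -/
noncomputable def linearized (f : F[X]) : K[X] :=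
  ∑ i ∈ Finset.range (f.natDegree + 1), C (algebraMap F K (f.coeff i)) * X ^ Fintype.card F ^ i

variable {K}

namespace FrobeniusModule

variable (F) in
/-- The identity map from `K` to its copy `FrobeniusModule F K`. -/
noncomputable def of : K ≃ₗ[F] FrobeniusModule F K :=
  Module.AEval'.of (FiniteField.frobeniusAlgHom F K).toLinearMap

theorem X_pow_smul_of (i : ℕ) (α : K) :
    (X ^ i : F[X]) • of F α = of F (α ^ Fintype.card F ^ i) := by
  rw [of, Module.AEval'.X_pow_smul_of, Module.End.smul_def, Module.End.coe_pow,
    AlgHom.coe_toLinearMap, FiniteField.coe_frobeniusAlgHom, pow_iterate]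

theorem smul_of (f : F[X]) (α : K) : f • of F α = of F ((linearized K f).eval α) := by
  conv_lhs => rw [f.as_sum_range_C_mul_X_pow]
  rw [linearized, eval_finsetSum, map_sum, Finset.sum_smul]
  refine Finset.sum_congr rfl fun i _ => ?_
  rw [mul_smul, X_pow_smul_of, eval_C_mul, eval_pow, eval_X, ← Algebra.smul_def, map_smul]
  exact Module.AEval.C_smul _ _ _

theorem X_pow_sub_one_smul_of_eq_zero_iff {n : ℕ} {α : K} :
    (X ^ n - 1 : F[X]) • of F α = 0 ↔ α ^ Fintype.card F ^ n = α := by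
  rw [sub_smul, one_smul, X_pow_smul_of, sub_eq_zero, (of F).injective.eq_iff]

end FrobeniusModule

theorem natDegree_linearized {f : F[X]} (hf : f ≠ 0) :
    (linearized K f).natDegree = Fintype.card F ^ f.natDegree := by
  have hq : 1 < Fintype.card F := Fintype.one_lt_card
  refine natDegree_eq_of_le_of_coeff_ne_zero (natDegree_sum_le_of_forall_le _ _ fun i hi => ?_) ?_
  · exact (natDegree_C_mul_X_pow_le _ _).trans
      (Nat.pow_le_pow_right hq.le (Finset.mem_range_succ_iff.1 hi))
  · simp [linearized, (Nat.pow_right_injective hq).eq_iff, hf]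

theorem derivative_linearized (f : F[X]) :
    derivative (linearized K f) = C (algebraMap F K (f.coeff 0)) := by
  have hq : (Fintype.card F : K) = 0 := by
    rw [← map_natCast (algebraMap F K), FiniteField.cast_card_eq_zero, map_zero]
  rw [linearized, derivative_sum, Finset.sum_range_succ', Finset.sum_eq_zero]
  · simp
  · simp [derivative_X_pow, hq]

theorem separable_linearized_sub_C {f : F[X]} (hf : f.coeff 0 ≠ 0) (a : K) :
    (linearized K f - C a).Separable := by
  rw [Polynomial.Separable, derivative_sub, derivative_C, sub_zero, derivative_linearized]
  exact isCoprime_one_right.of_isCoprime_of_dvd_right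
    (isUnit_iff_dvd_one.1 (isUnit_C.2 (by simpa using hf)))

namespace FrobeniusModule

variable [IsSepClosed K]

theorem smul_surjective {f : F[X]} (hf : f.coeff 0 ≠ 0) :
    Function.Surjective fun x : FrobeniusModule F K => f • x := by
  intro y
  have hf0 : f ≠ 0 := by rintro rfl; exact hf (coeff_zero 0)
  have hdeg : (linearized K f - C ((of F).symm y)).natDegree ≠ 0 := by
    rw [natDegree_sub_C, natDegree_linearized hf0]
    exact (pow_pos Fintype.card_pos _).ne'
  obtain ⟨α, hα⟩ := IsSepClosed.exists_root _ (fun h => hdeg (natDegree_eq_of_degree_eq_some h))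
    (separable_linearized_sub_C hf ((of F).symm y))
  have hα : (linearized K f).eval α = (of F).symm y := by simpa [sub_eq_zero] using hα
  exact ⟨of F α, by simp [smul_of, hα]⟩

theorem card_torsionBy {f : F[X]} (hf : f.coeff 0 ≠ 0) :
    Nat.card (Submodule.torsionBy F[X] (FrobeniusModule F K) f) =
      Fintype.card F ^ f.natDegree := by
  have hf0 : f ≠ 0 := by rintro rfl; exact hf (coeff_zero 0)
  have hsep : (linearized K f).Separable := by simpa using separable_linearized_sub_C hf (0 : K)
  rw [← natDegree_linearized (K := K) hf0, ← card_rootSet_eq_natDegree (K := K) hsep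
    (IsSepClosed.splits_codomain _ hsep), ← Nat.card_eq_fintype_card]
  refine (Nat.card_congr ((of F).toEquiv.subtypeEquiv fun α => ?_)).symm
  simp [mem_rootSet_of_ne hsep.ne_zero, smul_of]

end FrobeniusModule

end Frobenius

section Trace

/-- The polynomial `(X ^ n - 1) / (X ^ m - 1)`, for `m ∣ n`, written as a geometric sum. It acts on
`FrobeniusModule F K` as the trace `Tr_{n/m}`. -/
noncomputable def tracePoly (R : Type*) [Semiring R] (n m : ℕ) : R[X] :=
  ∑ j ∈ Finset.range (n / m), X ^ (m * j)

theorem X_pow_sub_one_mul_tracePoly (R : Type*) [CommRing R] {n m : ℕ} (h : m ∣ n) :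
    (X ^ m - 1) * tracePoly R n m = X ^ n - 1 := by
  simp_rw [tracePoly, pow_mul, mul_geom_sum, ← pow_mul, Nat.mul_div_cancel' h]

theorem isCoprime_tracePoly_gcd (F : Type*) [Field F] {a : ℕ} (b : ℕ) (ha : a ≠ 0) :
    IsCoprime (tracePoly F a (a.gcd b)) (tracePoly F b (a.gcd b)) := by
  refine isCoprime_of_forall_dvd_mul
    (X_pow_sub_one_ne_zero F (Nat.gcd_ne_zero_left ha : a.gcd b ≠ 0)) fun y hya hyb => ?_
  rw [X_pow_sub_one_mul_tracePoly F (Nat.gcd_dvd_left a b)] at hya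
  rw [X_pow_sub_one_mul_tracePoly F (Nat.gcd_dvd_right a b)] at hyb
  exact dvd_pow_gcd_sub_one_iff.2 ⟨hya, hyb⟩

theorem tracePoly_gcd_mul_tracePoly (R : Type*) [CommRing R] [IsDomain R] {n a b : ℕ} (hn : n ≠ 0)
    (ha : a ∣ n) (hb : b ∣ n) :
    tracePoly R a (a.gcd b) * tracePoly R n a = tracePoly R b (a.gcd b) * tracePoly R n b := by
  have hgcd : a.gcd b ≠ 0 := Nat.gcd_ne_zero_left (ne_zero_of_dvd_ne_zero hn ha)
  refine mul_left_cancel₀ (X_pow_sub_one_ne_zero R hgcd) ?_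
  rw [← mul_assoc, ← mul_assoc, X_pow_sub_one_mul_tracePoly R (Nat.gcd_dvd_left a b),
    X_pow_sub_one_mul_tracePoly R (Nat.gcd_dvd_right a b), X_pow_sub_one_mul_tracePoly R ha,
    X_pow_sub_one_mul_tracePoly R hb]

theorem tracePoly_ne_zero (R : Type*) [CommRing R] [Nontrivial R] {n m : ℕ} (hn : n ≠ 0)
    (h : m ∣ n) : tracePoly R n m ≠ 0 :=
  right_ne_zero_of_mul ((X_pow_sub_one_mul_tracePoly R h).trans_ne (X_pow_sub_one_ne_zero R hn))

/-- The trace `Tr_{n/m}(α) = ∑_{j < n/m} α ^ (q ^ (m * j))`, where `q = Fintype.card F`, for `α` in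
any semiring `K`; on the algebraic closure of `F` it is `trMap` by definition. -/
def frobeniusTrace (F : Type*) [Fintype F] {K : Type*} [Semiring K] (n m : ℕ) (α : K) : K :=
  ∑ j ∈ Finset.range (n / m), α ^ Fintype.card F ^ (m * j)

theorem frobeniusTrace_gcd_eq_of_forall_lt {F K ι : Type*} [Fintype F] [Semiring K] [LinearOrder ι]
    {d : ι → ℕ} {β : ι → K}
    (hcomp : ∀ i j, i < j → frobeniusTrace F (d i) ((d i).gcd (d j)) (β i) =
      frobeniusTrace F (d j) ((d i).gcd (d j)) (β j)) (i j : ι) :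
    frobeniusTrace F (d i) ((d i).gcd (d j)) (β i) =
      frobeniusTrace F (d j) ((d i).gcd (d j)) (β j) := by
  rcases lt_trichotomy i j with hij | rfl | hij
  · exact hcomp i j hij
  · rfl
  · rw [Nat.gcd_comm]
    exact (hcomp j i hij).symm

theorem FrobeniusModule.tracePoly_smul_of {F K : Type*} [Field F] [Fintype F] [Field K]
    [Algebra F K] (n m : ℕ) (α : K) :
    tracePoly F n m • of F α = of F (frobeniusTrace F n m α) := by
  simp only [tracePoly, frobeniusTrace, Finset.sum_smul, X_pow_smul_of, map_sum]

end Trace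

section PrescribedTraces

variable {F K ι : Type*} [Field F] [Fintype F] [Field K] [Algebra F K]

theorem FrobeniusModule.smul_of_eq_smul_of {n a b : ℕ} (hn : n ≠ 0) (ha : a ∣ n) (hb : b ∣ n)
    {α β : K} (h : frobeniusTrace F a (a.gcd b) α = frobeniusTrace F b (a.gcd b) β) {u v : F[X]}
    (huv : u * tracePoly F n a = v * tracePoly F n b) : u • of F α = v • of F β := by
  have ha0 : a ≠ 0 := ne_zero_of_dvd_ne_zero hn ha
  obtain ⟨c, rfl, rfl⟩ := exists_eq_mul_of_mul_eq_mul (isCoprime_tracePoly_gcd F b ha0)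
    (tracePoly_ne_zero F ha0 (Nat.gcd_dvd_left a b)) (tracePoly_ne_zero F hn hb)
    (tracePoly_gcd_mul_tracePoly F hn ha hb) huv
  rw [mul_smul, mul_smul, tracePoly_smul_of, tracePoly_smul_of, h]

theorem pow_card_pow_eq_self_of_frobeniusTrace {n m : ℕ} (h : m ∣ n) {α : K}
    (hα : frobeniusTrace F n m α ^ Fintype.card F ^ m = frobeniusTrace F n m α) :
    α ^ Fintype.card F ^ n = α := by
  rw [← FrobeniusModule.X_pow_sub_one_smul_of_eq_zero_iff] at hα ⊢
  rw [← X_pow_sub_one_mul_tracePoly F h, mul_smul, FrobeniusModule.tracePoly_smul_of, hα]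

variable [IsSepClosed K]

variable (F K) in
theorem card_pow_card_pow_eq_self {n : ℕ} (hn : n ≠ 0) :
    Nat.card {α : K // α ^ Fintype.card F ^ n = α} = Fintype.card F ^ n := by
  conv_rhs => rw [← natDegree_X_pow_sub_one (R := F) n, ← FrobeniusModule.card_torsionBy (K := K)
    (coeff_zero_ne_zero_of_dvd_X_pow_sub_one hn dvd_rfl)]
  exact Nat.card_congr ((FrobeniusModule.of F).toEquiv.subtypeEquiv fun α =>
    FrobeniusModule.X_pow_sub_one_smul_of_eq_zero_iff.symm)

variable {n : ℕ} {d : ι → ℕ} {β : ι → K}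

theorem card_forall_frobeniusTrace_eq_of_span [Finite ι] (hn : n ≠ 0) (hdvd : ∀ i, d i ∣ n)
    {Q : F[X]}
    (hQ : Ideal.span (Set.range fun i => tracePoly F n (d i)) = Ideal.span {Q})
    (hQN : Q ∣ X ^ n - 1)
    (hcomp : ∀ i j, frobeniusTrace F (d i) ((d i).gcd (d j)) (β i) =
      frobeniusTrace F (d j) ((d i).gcd (d j)) (β j)) :
    Nat.card {α : K // ∀ i, frobeniusTrace F n (d i) α = β i} = Fintype.card F ^ Q.natDegree := by
  have hQ0 : Q ≠ 0 := ne_zero_of_dvd_ne_zero (X_pow_sub_one_ne_zero F hn) hQN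
  have hQc : Q.coeff 0 ≠ 0 := coeff_zero_ne_zero_of_dvd_X_pow_sub_one hn hQN
  obtain ⟨x₀, hx₀⟩ := exists_forall_smul_eq hQ hQ0 (FrobeniusModule.smul_surjective hQc)
    fun i j _ _ => FrobeniusModule.smul_of_eq_smul_of hn (hdvd i) (hdvd j) (hcomp i j)
  rw [← FrobeniusModule.card_torsionBy (K := K) hQc, ← card_forall_smul_eq hQ hx₀]
  refine Nat.card_congr ((FrobeniusModule.of F).toEquiv.subtypeEquiv fun α => ?_)
  simp only [LinearEquiv.coe_toEquiv, FrobeniusModule.tracePoly_smul_of,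
    (FrobeniusModule.of F).injective.eq_iff]

theorem card_forall_frobeniusTrace_eq [Fintype ι] [Nonempty ι] (hn : n ≠ 0)
    (hdvd : ∀ i, d i ∣ n)
    (hcomp : ∀ i j, frobeniusTrace F (d i) ((d i).gcd (d j)) (β i) =
      frobeniusTrace F (d j) ((d i).gcd (d j)) (β j)) :
    (Nat.card {α : K // ∀ i, frobeniusTrace F n (d i) α = β i} : ℚ) =
      (Fintype.card F : ℚ) ^ ((n : ℤ) - alternatingGcdSum d) := by
  have hN : (X ^ n - 1 : F[X]) ≠ 0 := X_pow_sub_one_ne_zero F hn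
  obtain ⟨L, hL⟩ := exists_forall_dvd_iff fun i => (X ^ d i - 1 : F[X])
  obtain ⟨Q, hLQ⟩ : L ∣ X ^ n - 1 :=
    (hL _).2 fun i => ⟨_, (X_pow_sub_one_mul_tracePoly F (hdvd i)).symm⟩
  have hL0 : L ≠ 0 := ne_zero_of_dvd_ne_zero hN ⟨Q, hLQ⟩
  have hQ0 : Q ≠ 0 := right_ne_zero_of_mul (hLQ.symm.trans_ne hN)
  have hspan : Ideal.span (Set.range fun i => tracePoly F n (d i)) = Ideal.span {Q} :=
    span_range_cofactor hN (fun i => X_pow_sub_one_mul_tracePoly F (hdvd i)) hL hLQ.symm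
  have hdeg : (Q.natDegree : ℤ) = n - alternatingGcdSum d := by
    rw [← natDegree_lcm_X_pow_sub_one hL0 hL, eq_sub_iff_add_eq', ← Nat.cast_add,
      ← natDegree_mul hL0 hQ0, ← hLQ, natDegree_X_pow_sub_one]
  rw [card_forall_frobeniusTrace_eq_of_span hn hdvd hspan ⟨L, hLQ.trans (mul_comm L Q)⟩ hcomp,
    ← hdeg, zpow_natCast, Nat.cast_pow]

theorem prescribed_traces_count_general [Fintype ι] (hn : n ≠ 0) (hdvd : ∀ i, d i ∣ n)
    (hβ : ∀ i, β i ^ Fintype.card F ^ d i = β i)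
    (hcomp : ∀ i j, frobeniusTrace F (d i) ((d i).gcd (d j)) (β i) =
      frobeniusTrace F (d j) ((d i).gcd (d j)) (β j)) :
    (Nat.card {α : K // α ^ Fintype.card F ^ n = α ∧ ∀ i, frobeniusTrace F n (d i) α = β i} : ℚ) =
      (Fintype.card F : ℚ) ^ ((n : ℤ) - alternatingGcdSum d) := by
  rcases isEmpty_or_nonempty ι with _ | ⟨⟨i⟩⟩
  · simp [alternatingGcdSum_of_isEmpty, card_pow_card_pow_eq_self F K hn]
  · have : Nonempty ι := ⟨i⟩
    rw [← card_forall_frobeniusTrace_eq hn hdvd hcomp]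
    congr! 4 with α
    refine and_iff_right_of_imp fun hα => pow_card_pow_eq_self_of_frobeniusTrace (hdvd i) ?_
    rw [hα i, hβ i]

end PrescribedTraces

/-- **Theorem 9.** Let `n > 1`, let `d₁, …, d_k` be distinct divisors of `n` and let
`βᵢ ∈ F_{q^{dᵢ}}` satisfy the compatibility conditions
`Tr_{dᵢ/gcd(dᵢ,dⱼ)}(βᵢ) = Tr_{dⱼ/gcd(dᵢ,dⱼ)}(βⱼ)` for `i < j`. Then the number of `α ∈ F_{q^n}`
with `Tr_{n/dᵢ}(α) = βᵢ` for all `i` equals `q^{n - λ(d₁, …, d_k)}`. -/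
theorem prescribed_traces_count
    (F : Type*) [Field F] [Fintype F]
    (q : ℕ) (hq : q = Fintype.card F)
    (n : ℕ) (hn : 1 < n)
    {k : ℕ} (d : Fin k → ℕ) (hdvd : ∀ i, d i ∣ n) (hdist : Function.Injective d)
    (β : Fin k → AlgebraicClosure F) (hβ : ∀ i, β i ^ q ^ (d i) = β i)
    (hcomp : ∀ i j : Fin k, i < j →
      trMap F (d i) (Nat.gcd (d i) (d j)) (β i) = trMap F (d j) (Nat.gcd (d i) (d j)) (β j)) :
    (Nat.card {α : AlgebraicClosure F //
        α ^ q ^ n = α ∧ ∀ i, trMap F n (d i) α = β i} : ℚ) =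
      (q : ℚ) ^ ((n : ℤ) - lambdaSum d) := by
  subst hq
  rw [lambdaSum_eq_alternatingGcdSum]
  exact prescribed_traces_count_general (by omega) hdvd hβ
    (frobeniusTrace_gcd_eq_of_forall_lt hcomp)
end
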